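/- Let M be a metric tree, let a, x, y ∈ M and r > 0 with x, y ∈ B(a; r), and let m be the midpoint of the metric segment [x,y] (i.e., the unique point m ∈ [x,y] with d(x,m) = d(m,y) = d(x,y)/2). Then B_c(m; d(x,y)/2) ⊆ B(a; r), where B(a;r) is the open ball and B_c(m;s) the closed ball. -/

import Mathlib

/-- `S` is a metric segment from `x` to `y` in a metric space: `S` contains `x` and `y`, and
the map `z ↦ dist x z` is an isometry from `S` onto the real interval `[0, dist x y]`. -/
def IsMetricSegment {X : Type*} [MetricSpace X] (S : Set X) (x y : X) : Prop :=
  x ∈ S ∧ y ∈ S ∧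
    (∀ z ∈ S, ∀ w ∈ S, |dist x z - dist x w| = dist z w) ∧
    (fun z => dist x z) '' S = Set.Icc 0 (dist x y)

/-- A metric tree structure on a metric space `M`: every pair of points is joined by a unique
metric segment `seg x y`, and if `[x,z] ∩ [z,y] = {z}` then `[x,z] ∪ [z,y] = [x,y]`. -/
structure MetricTree (M : Type*) [MetricSpace M] where
  seg : M → M → Set M
  seg_isSegment : ∀ x y : M, IsMetricSegment (seg x y) x y
  seg_unique : ∀ x y : M, ∀ S : Set M, IsMetricSegment S x y → S = seg x y
  seg_glue : ∀ x y z : M, seg x z ∩ seg z y = {z} → seg x z ∪ seg z y = seg x y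

/-- The set (Kuratowski) measure of noncompactness of `A`: the infimum of all `b > 0` such that
`A` admits a finite cover by subsets of `A` of diameter at most `b`. -/
noncomputable def setMNC {X : Type*} [MetricSpace X] (A : Set X) : ℝ :=
  sInf {b : ℝ | 0 < b ∧ ∃ (n : ℕ) (E : Fin n → Set X),
    (∀ j, E j ⊆ A) ∧ (∀ j, Metric.diam (E j) ≤ b) ∧ A ⊆ ⋃ j, E j}

/-- The ball (Hausdorff) measure of noncompactness of `A`: the infimum of all `b > 0` such that
`A` admits a finite cover by open balls of radius `b` centered in the ambient space. -/
noncomputable def ballMNC {X : Type*} [MetricSpace X] (A : Set X) : ℝ :=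
  sInf {b : ℝ | 0 < b ∧ ∃ (n : ℕ) (c : Fin n → X), A ⊆ ⋃ j, Metric.ball (c j) b}

/-- The diameter-based ball measure of noncompactness of `A`: the infimum of all `b > 0` such
that `A` admits a finite cover by open balls each of diameter at most `b`. -/
noncomputable def ballDiamMNC {X : Type*} [MetricSpace X] (A : Set X) : ℝ :=
  sInf {b : ℝ | 0 < b ∧ ∃ (n : ℕ) (c : Fin n → X) (r : Fin n → ℝ),
    (∀ j, Metric.diam (Metric.ball (c j) (r j)) ≤ b) ∧ A ⊆ ⋃ j, Metric.ball (c j) (r j)}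

/-- `b > 0` is Lifschitz for `X` iff there is `a > 1` such that whenever `dist x y > r > 0`,
some closed ball of radius `r` contains `closedBall x (a*r) ∩ closedBall y (b*r)`. -/
def IsLifschitz (X : Type*) [MetricSpace X] (b : ℝ) : Prop :=
  0 < b ∧ ∃ a : ℝ, 1 < a ∧ ∀ x y : X, ∀ r : ℝ, 0 < r → r < dist x y →
    ∃ z : X, Metric.closedBall x (a * r) ∩ Metric.closedBall y (b * r) ⊆ Metric.closedBall z r

/-- The Lifschitz characteristic of `X`: the supremum of all `b` Lifschitz for `X`. -/
noncomputable def lifschitzChar (X : Type*) [MetricSpace X] : ℝ :=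
  sSup {b : ℝ | IsLifschitz X b}

/-!
Let `p` be the point of `[x, y]` nearest to `a`. Then `[a, p]` meets `[p, w]` only in `p` for every
`w ∈ [x, y]`, so `d(a, w) = d(a, p) + d(p, w)`. Given `m ∈ [x, y]`, let `e` be an endpoint of
`[x, y]` such that `m ∈ [p, e]`. The path from `a` to `e` runs through `p` and then `m`, whence
`d(a, m) + d(m, e) = d(a, e) < r`, and by the triangle inequality every point within `d(m, e)` of
`m` lies in `B(a; r)`.
-/

section

open Metric Set

variable {M : Type*} [MetricSpace M] {S : Set M} {a p q x y z w : M}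

namespace IsMetricSegment

theorem dist_mem_Icc (h : IsMetricSegment S x y) (hz : z ∈ S) : dist x z ∈ Icc 0 (dist x y) :=
  h.2.2.2 ▸ mem_image_of_mem _ hz

theorem dist_add_dist_of_le (h : IsMetricSegment S x y) (hz : z ∈ S) (hw : w ∈ S)
    (hle : dist x z ≤ dist x w) : dist x z + dist z w = dist x w := by
  have hzw : |dist x z - dist x w| = dist z w := h.2.2.1 z hz w hw
  rw [abs_of_nonpos (sub_nonpos.2 hle)] at hzw
  linarith

theorem dist_add_dist (h : IsMetricSegment S x y) (hz : z ∈ S) :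
    dist x z + dist z y = dist x y :=
  h.dist_add_dist_of_le hz h.2.1 (h.dist_mem_Icc hz).2

theorem symm (h : IsMetricSegment S x y) : IsMetricSegment S y x := by
  have dist_eq : ∀ z ∈ S, dist y z = dist x y - dist x z := fun z hz ↦ by
    rw [dist_comm y z, ← h.dist_add_dist hz, add_sub_cancel_left]
  refine ⟨h.2.1, h.1, fun z hz w hw ↦ ?_, ?_⟩
  · rw [dist_eq z hz, dist_eq w hw, sub_sub_sub_cancel_left, abs_sub_comm, h.2.2.1 z hz w hw]
  · calc (fun z ↦ dist y z) '' S
        = (fun t ↦ dist x y - t) '' ((fun z ↦ dist x z) '' S) := by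
          rw [image_image]; exact image_congr dist_eq
      _ = Icc 0 (dist y x) := by
          rw [h.2.2.2, image_const_sub_Icc, sub_self, sub_zero, dist_comm]

theorem subsegment (h : IsMetricSegment S x y) (hp : p ∈ S) (hq : q ∈ S)
    (hpq : dist x p ≤ dist x q) :
    IsMetricSegment (S ∩ (fun z ↦ dist x z) ⁻¹' Icc (dist x p) (dist x q)) p q := by
  have dist_eq : ∀ z ∈ S, dist x p ≤ dist x z → dist p z = dist x z - dist x p :=
    fun z hz hpz ↦ eq_sub_of_add_eq' (h.dist_add_dist_of_le hp hz hpz)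
  refine ⟨⟨hp, le_rfl, hpq⟩, ⟨hq, hpq, le_rfl⟩, fun z hz w hw ↦ ?_, ?_⟩
  · rw [dist_eq z hz.1 hz.2.1, dist_eq w hw.1 hw.2.1, sub_sub_sub_cancel_right,
      h.2.2.1 z hz.1 w hw.1]
  · have Icc_subset : Icc (dist x p) (dist x q) ⊆ Icc 0 (dist x y) :=
      Icc_subset_Icc dist_nonneg (h.dist_mem_Icc hq).2
    calc (fun z ↦ dist p z) '' (S ∩ (fun z ↦ dist x z) ⁻¹' Icc (dist x p) (dist x q))
        = (fun t ↦ t - dist x p) ''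
            ((fun z ↦ dist x z) '' (S ∩ (fun z ↦ dist x z) ⁻¹' Icc (dist x p) (dist x q))) := by
          rw [image_image]; exact image_congr fun z hz ↦ dist_eq z hz.1 hz.2.1
      _ = Icc 0 (dist p q) := by
          rw [image_inter_preimage, h.2.2.2, inter_eq_self_of_subset_right Icc_subset,
            image_sub_const_Icc, sub_self, ← dist_eq q hq hpq]

theorem isCompact (h : IsMetricSegment S x y) : IsCompact S := by
  have isometry_dist : Isometry fun z : S ↦ dist x z :=
    Isometry.of_dist_eq fun z w ↦ h.2.2.1 z z.2 w w.2
  have range_dist : range (fun z : S ↦ dist x z) = Icc 0 (dist x y) := by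
    rw [← h.2.2.2, image_eq_range]
  rw [isCompact_iff_isCompact_univ, isometry_dist.isEmbedding.isCompact_iff, image_univ, range_dist]
  exact isCompact_Icc

end IsMetricSegment

namespace MetricTree

theorem dist_add_dist_of_mem_seg (T : MetricTree M) (hz : z ∈ T.seg x y) :
    dist x z + dist z y = dist x y :=
  (T.seg_isSegment x y).dist_add_dist hz

theorem seg_comm (T : MetricTree M) (x y : M) : T.seg x y = T.seg y x :=
  T.seg_unique y x _ (T.seg_isSegment x y).symm

theorem seg_subset_seg (T : MetricTree M) (hp : p ∈ T.seg x y) (hq : q ∈ T.seg x y) :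
    T.seg p q ⊆ T.seg x y := by
  wlog hpq : dist x p ≤ dist x q generalizing p q
  · rw [T.seg_comm p q]
    exact this hq hp (le_of_not_ge hpq)
  rw [← T.seg_unique p q _ ((T.seg_isSegment x y).subsegment hp hq hpq)]
  exact inter_subset_left

theorem dist_add_dist_of_forall_dist_le (T : MetricTree M)
    (hp : ∀ q ∈ T.seg p w, dist a p ≤ dist a q) : dist a p + dist p w = dist a w := by
  have inter_eq : T.seg a p ∩ T.seg p w = {p} := by
    refine Subset.antisymm (fun q hq ↦ ?_)
      (singleton_subset_iff.2 ⟨(T.seg_isSegment a p).2.1, (T.seg_isSegment p w).1⟩)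
    have dist_add : dist a q + dist q p = dist a p := T.dist_add_dist_of_mem_seg hq.1
    exact dist_le_zero.1 (by linarith [hp q hq.2])
  have p_mem : p ∈ T.seg a w :=
    T.seg_glue a w p inter_eq ▸ mem_union_left _ (T.seg_isSegment a p).2.1
  exact T.dist_add_dist_of_mem_seg p_mem

theorem exists_mem_seg_forall_dist_add_dist (T : MetricTree M) (a x y : M) :
    ∃ p ∈ T.seg x y, ∀ w ∈ T.seg x y, dist a p + dist p w = dist a w := by
  have hS := T.seg_isSegment x y
  obtain ⟨p, hp, hmin⟩ := hS.isCompact.exists_isMinOn ⟨x, hS.1⟩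
    (continuous_const.dist continuous_id : Continuous (dist a)).continuousOn
  exact ⟨p, hp, fun w hw ↦ T.dist_add_dist_of_forall_dist_le fun q hq ↦
    hmin (T.seg_subset_seg hp hw hq)⟩

theorem dist_add_dist_eq_left_or_right (T : MetricTree M) (a : M) (hz : z ∈ T.seg x y) :
    dist a z + dist z x = dist a x ∨ dist a z + dist z y = dist a y := by
  have hS := T.seg_isSegment x y
  obtain ⟨p, hp, hproj⟩ := T.exists_mem_seg_forall_dist_add_dist a x y
  rcases le_total (dist x z) (dist x p) with z_before_p | p_before_z
  · left
    have between : dist p z + dist z x = dist p x := by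
      linarith only [hS.dist_add_dist_of_le hz hp z_before_p, dist_comm x z, dist_comm x p,
        dist_comm z p]
    rw [← hproj z hz, ← hproj x hS.1, add_assoc, between]
  · right
    have between : dist p z + dist z y = dist p y := by
      linarith only [hS.dist_add_dist_of_le hp hz p_before_z, hS.dist_add_dist hp,
        hS.dist_add_dist hz]
    rw [← hproj z hz, ← hproj y hS.2.1, add_assoc, between]

end MetricTree

theorem stmt_12_general (T : MetricTree M) {m : M} {r : ℝ} (hx : x ∈ ball a r) (hy : y ∈ ball a r)
    (hm : m ∈ T.seg x y) :
    closedBall m (min (dist m x) (dist m y)) ⊆ ball a r := by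
  refine closedBall_subset_ball' ?_
  rw [mem_ball'] at hx hy
  rcases T.dist_add_dist_eq_left_or_right a hm with h | h
  · linarith [min_le_left (dist m x) (dist m y), dist_comm m a]
  · linarith [min_le_right (dist m x) (dist m y), dist_comm m a]

end

theorem stmt_12 {M : Type*} [MetricSpace M] (T : MetricTree M)
    (a x y m : M) (r : ℝ) (hr : 0 < r)
    (hx : x ∈ Metric.ball a r) (hy : y ∈ Metric.ball a r)
    (hm : m ∈ T.seg x y) (hmx : dist x m = dist x y / 2) (hmy : dist m y = dist x y / 2) :
    Metric.closedBall m (dist x y / 2) ⊆ Metric.ball a r := by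
  have radius_eq : min (dist m x) (dist m y) = dist x y / 2 := by
    rw [dist_comm m x, hmx, hmy, min_self]
  exact radius_eq ▸ stmt_12_general T hx hy hm
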